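/- Let n ≥ 2 and let m = 2m₀+1 be odd with m₀ ≥ 1. Let H be a Hankel tensor of order m and dimension n with parameter vector h ∈ ℂ^{d+1}, d = (n−1)m, let s = ⌊d/2⌋, and let r = rank C_{d−s,s}(h). Suppose r ≤ 1 + (n−1)m₀, the kernel of C_{d−r,r}(h) is nonzero, and every nonzero f = (f_0,…,f_r) ∈ ker C_{d−r,r}(h) has binary form f(x,y) = f_0 x^r + ⋯ + f_r y^r that is NOT squarefree as a homogeneous polynomial in ℂ[x,y]. Then rank_V(H) = d−r+2, brank_V(H) = brank_S(H) = brank(H) = r, and r ≤ rank_S(H) ≤ d−r+2. -/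

import Mathlib

open scoped BigOperators
open MvPolynomial

noncomputable section

/-- An order-`m`, dimension-`n` complex tensor. -/
abbrev Tensor (m n : ℕ) := (Fin m → Fin n) → ℂ

/-- Tensors expressible as a sum of `r` rank-one tensors. -/
def cpSet (m n r : ℕ) : Set (Tensor m n) :=
  {T | ∃ u : Fin r → Fin m → Fin n → ℂ, ∀ i, T i = ∑ k, ∏ j, u k j (i j)}

/-- Tensors expressible as a sum of `r` symmetric rank-one tensors. -/
def symSet (m n r : ℕ) : Set (Tensor m n) :=
  {T | ∃ v : Fin r → Fin n → ℂ, ∀ i, T i = ∑ k, ∏ j, v k (i j)}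

/-- The Vandermonde vector `v(a,b) ∈ ℂ^n`, `v(a,b)_i = a^(n-1-i) * b^i`. -/
def vand (n : ℕ) (a b : ℂ) : Fin n → ℂ := fun i => a ^ (n - 1 - (i : ℕ)) * b ^ (i : ℕ)

/-- Tensors expressible as a sum of `r` Vandermonde rank-one tensors. -/
def vandSet (m n r : ℕ) : Set (Tensor m n) :=
  {T | ∃ ab : Fin r → ℂ × ℂ, ∀ i, T i = ∑ k, ∏ j, vand n (ab k).1 (ab k).2 (i j)}

/-- The cp rank of a tensor. -/
def cpRank {m n : ℕ} (T : Tensor m n) : ℕ := sInf {r | T ∈ cpSet m n r}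

/-- The symmetric rank of a tensor. -/
def symRank {m n : ℕ} (T : Tensor m n) : ℕ := sInf {r | T ∈ symSet m n r}

/-- The Vandermonde rank of a tensor. -/
def vandRank {m n : ℕ} (T : Tensor m n) : ℕ := sInf {r | T ∈ vandSet m n r}

/-- The border rank of a tensor (closure in the product topology). -/
def brank {m n : ℕ} (T : Tensor m n) : ℕ := sInf {r | T ∈ closure (cpSet m n r)}

/-- The symmetric border rank of a tensor. -/
def bSymRank {m n : ℕ} (T : Tensor m n) : ℕ := sInf {r | T ∈ closure (symSet m n r)}

/-- The border Vandermonde rank of a tensor. -/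
def bVandRank {m n : ℕ} (T : Tensor m n) : ℕ := sInf {r | T ∈ closure (vandSet m n r)}

/-- `T` is the Hankel tensor with parameter vector `h ∈ ℂ^{(n-1)m+1}`. -/
def IsHankel {m n : ℕ} (T : Tensor m n) (h : Fin ((n - 1) * m + 1) → ℂ) : Prop :=
  ∀ i : Fin m → Fin n, T i = h ⟨∑ j, (i j : ℕ), by
    have h1 : ∑ j, (i j : ℕ) ≤ ∑ _j : Fin m, (n - 1) :=
      Finset.sum_le_sum fun j _ => Nat.le_pred_of_lt (i j).isLt
    simp only [Finset.sum_const, Finset.card_univ, Fintype.card_fin, smul_eq_mul] at h1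
    exact Nat.lt_succ_of_le (h1.trans (le_of_eq (Nat.mul_comm m (n - 1))))⟩

/-- The `(d-r+1) × (r+1)` Hankel (catalecticant) matrix `C_{d-r,r}(h)` of `h ∈ ℂ^{d+1}`. -/
def hMat (d r : ℕ) (h : Fin (d + 1) → ℂ) : Matrix (Fin (d - r + 1)) (Fin (r + 1)) ℂ :=
  Matrix.of fun i j => if hij : (i : ℕ) + (j : ℕ) < d + 1 then h ⟨(i : ℕ) + (j : ℕ), hij⟩ else 0

/-- The binary form `f(x,y) = f_0 x^r + f_1 x^(r-1) y + ⋯ + f_r y^r`. -/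
def binForm (r : ℕ) (f : Fin (r + 1) → ℂ) : MvPolynomial (Fin 2) ℂ :=
  ∑ j : Fin (r + 1), C (f j) * X 0 ^ (r - (j : ℕ)) * X 1 ^ (j : ℕ)

/-- The binary form `h(x,y) = ∑_j binom(d,j) h_j x^j y^(d-j)` associated with `h ∈ ℂ^{d+1}`. -/
def assocForm (d : ℕ) (h : Fin (d + 1) → ℂ) : MvPolynomial (Fin 2) ℂ :=
  ∑ j : Fin (d + 1), C ((d.choose (j : ℕ) : ℂ) * h j) * X 0 ^ (j : ℕ) * X 1 ^ (d - (j : ℕ))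

/-- Parameter vectors of binary forms of Waring rank at most `r`. -/
def waringSet (d r : ℕ) : Set (Fin (d + 1) → ℂ) :=
  {h | ∃ ab : Fin r → ℂ × ℂ,
    assocForm d h = ∑ i, (C (ab i).1 * X 0 + C (ab i).2 * X 1) ^ d}

/-- The Waring rank of the binary form associated with `h`. -/
def waringRank (d : ℕ) (h : Fin (d + 1) → ℂ) : ℕ := sInf {r | h ∈ waringSet d r}

/-- The border Waring rank of the binary form associated with `h`. -/
def bWaringRank (d : ℕ) (h : Fin (d + 1) → ℂ) : ℕ := sInf {r | h ∈ closure (waringSet d r)}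

open scoped Polynomial

/-- The linear functional on `ℂ[X]` sending `X ^ i` to `h i`. -/
def momentFunctional (h : ℕ → ℂ) : ℂ[X] →ₗ[ℂ] ℂ :=
  (Polynomial.basisMonomials ℂ).constr ℂ h

lemma momentFunctional_X_pow (h : ℕ → ℂ) (i : ℕ) :
    momentFunctional h (Polynomial.X ^ i) = h i := by
  have : (Polynomial.X ^ i : ℂ[X]) = Polynomial.basisMonomials ℂ i := by
    rw [Polynomial.coe_basisMonomials, Polynomial.X_pow_eq_monomial]
  rw [momentFunctional, this]
  exact Module.Basis.constr_basis _ _ _ _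

/-- Forms of degree `k`, dehomogenized to polynomials of degree at most `k`, that are apolar to a
functional on polynomials of degree at most `d`. -/
def apolar (L : ℂ[X] →ₗ[ℂ] ℂ) (d k : ℕ) : Submodule ℂ ℂ[X] where
  carrier := {f | f.natDegree ≤ k ∧ ∀ p : ℂ[X], p.natDegree + k ≤ d → L (f * p) = 0}
  add_mem' := by
    rintro f g ⟨hf, hf'⟩ ⟨hg, hg'⟩
    refine ⟨Polynomial.natDegree_add_le_of_degree_le hf hg, fun p hp => ?_⟩
    rw [add_mul, map_add, hf' p hp, hg' p hp, add_zero]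
  zero_mem' := by simp
  smul_mem' := by
    rintro c f ⟨hf, hf'⟩
    refine ⟨(Polynomial.natDegree_smul_le c f).trans hf, fun p hp => ?_⟩
    rw [smul_mul_assoc, map_smul, hf' p hp, smul_zero]

lemma mem_apolar_iff_X_pow {L : ℂ[X] →ₗ[ℂ] ℂ} {d k : ℕ} {f : ℂ[X]} :
    f ∈ apolar L d k ↔
      f.natDegree ≤ k ∧ ∀ i : ℕ, i + k ≤ d → L (f * Polynomial.X ^ i) = 0 := by
  refine and_congr_right fun _ => ⟨fun hf i hi => hf _ (by simpa using hi), fun hf p hp => ?_⟩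
  rw [Polynomial.as_sum_range_C_mul_X_pow p, Finset.mul_sum, map_sum]
  refine Finset.sum_eq_zero fun i hi => ?_
  rw [Finset.mem_range] at hi
  rw [mul_left_comm, ← Polynomial.smul_eq_C_mul, map_smul, hf i (by omega), smul_zero]

lemma mul_mem_apolar {L : ℂ[X] →ₗ[ℂ] ℂ} {d k l : ℕ} {f a : ℂ[X]} (hf : f ∈ apolar L d k)
    (ha : a.natDegree ≤ l) : f * a ∈ apolar L d (k + l) := by
  refine ⟨Polynomial.natDegree_mul_le_of_le hf.1 ha, fun p hp => ?_⟩
  rw [mul_assoc]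
  refine hf.2 _ ?_
  have := Polynomial.natDegree_mul_le (p := a) (q := p)
  omega

/-- Two coprime binary forms of degrees `a` and `b` generate all forms of degree at least
`a + b - 1`. -/
lemma exists_eq_mul_add_mul_of_isCoprime {F G T : ℂ[X]} {a b N : ℕ} (hFG : IsCoprime F G)
    (hF : F.natDegree ≤ a) (hG : G.natDegree ≤ b) (hlead : F.coeff a ≠ 0 ∨ G.coeff b ≠ 0)
    (hN : a + b ≤ N + 1) (hT : T.natDegree ≤ N) :
    ∃ p q : ℂ[X], T = F * p + G * q ∧
      (p = 0 ∨ p.natDegree + a ≤ N) ∧ (q = 0 ∨ q.natDegree + b ≤ N) := by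
  wlog h : F.coeff a ≠ 0 generalizing F G a b
  · obtain ⟨q, p, h1, h2, h3⟩ := this hFG.symm hG hF hlead.symm (by omega)
      (hlead.resolve_left h)
    exact ⟨p, q, by rw [h1, add_comm], h3, h2⟩
  have hFa : F.natDegree = a := le_antisymm hF (Polynomial.le_natDegree_of_ne_zero h)
  have hF0 : F ≠ 0 := by rintro rfl; simp at h
  obtain ⟨u, v, huv⟩ := hFG
  set q := (T * v) % F with hq
  set p := T * u + (T * v) / F * G with hp
  have hT' : T = F * p + G * q := by
    have h1 := EuclideanDomain.div_add_mod (T * v) F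
    calc T = T * (u * F + v * G) := by rw [huv, mul_one]
      _ = T * u * F + (T * v) * G := by ring
      _ = T * u * F + (F * (T * v / F) + T * v % F) * G := by rw [h1]
      _ = F * p + G * q := by rw [hp, hq]; ring
  have hqd : q = 0 ∨ q.natDegree < a := by
    by_cases hq0 : q = 0
    · exact Or.inl hq0
    · right
      rw [← hFa]
      exact Polynomial.natDegree_lt_natDegree hq0 (Polynomial.degree_mod_lt _ hF0)
  refine ⟨p, q, hT', ?_, ?_⟩
  · by_cases hp0 : p = 0
    · exact Or.inl hp0
    right
    have h1 : (F * p).natDegree ≤ N := by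
      have : F * p = T - G * q := by rw [hT']; ring
      rw [this]
      refine (Polynomial.natDegree_sub_le _ _).trans (max_le hT ?_)
      rcases hqd with h0 | h0
      · simp [h0]
      · have := Polynomial.natDegree_mul_le (p := G) (q := q)
        omega
    rw [Polynomial.natDegree_mul hF0 hp0] at h1
    omega
  · rcases hqd with h0 | h0
    · exact Or.inl h0
    · right; omega

/-- If two forms apolar to the same functional have sufficiently small degrees and the first one
has minimal degree, then the first divides the second. -/
lemma dvd_of_mem_apolar {L : ℂ[X] →ₗ[ℂ] ℂ} {d r k : ℕ} {f q : ℂ[X]}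
    (hmin : ∀ j < r, ∀ e ∈ apolar L d j, e = 0) (hf : f ∈ apolar L d r) (hq : q ∈ apolar L d k)
    (hf0 : f ≠ 0) (hq0 : q ≠ 0) (hrd : r ≤ d)
    (hrk : r + k ≤ d + 1 +
      ((gcd f q).natDegree + min (r - f.natDegree) (k - q.natDegree))) :
    f ∣ q ∧ r - f.natDegree ≤ k - q.natDegree := by
  have hg0 : gcd f q ≠ 0 := fun h => hf0 ((gcd_eq_zero_iff _ _).1 h).1
  obtain ⟨f1, hf1⟩ := gcd_dvd_left f q
  obtain ⟨q1, hq1⟩ := gcd_dvd_right f q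
  set E := gcd f q with hE
  set e := E.natDegree + min (r - f.natDegree) (k - q.natDegree) with he
  have hf10 : f1 ≠ 0 := by rintro rfl; exact hf0 (by simpa using hf1)
  have hq10 : q1 ≠ 0 := by rintro rfl; exact hq0 (by simpa using hq1)
  have hfd : f.natDegree = E.natDegree + f1.natDegree := by
    conv_lhs => rw [hf1]
    exact Polynomial.natDegree_mul hg0 hf10
  have hqd : q.natDegree = E.natDegree + q1.natDegree := by
    conv_lhs => rw [hq1]
    exact Polynomial.natDegree_mul hg0 hq10
  have hfr := hf.1
  have hqk := hq.1
  have hcop : IsCoprime f1 q1 := by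
    obtain ⟨u, v, huv⟩ := exists_gcd_eq_mul_add_mul f q
    refine ⟨u, v, mul_left_cancel₀ hg0 ?_⟩
    rw [← hE] at huv
    calc E * (u * f1 + v * q1) = (E * f1) * u + (E * q1) * v := by ring
      _ = E * 1 := by rw [← hf1, ← hq1, mul_one, huv]
  have hlead : f1.coeff (r - e) ≠ 0 ∨ q1.coeff (k - e) ≠ 0 := by
    rcases le_total (r - f.natDegree) (k - q.natDegree) with h | h
    · left
      have : r - e = f1.natDegree := by omega
      rw [this]
      exact Polynomial.leadingCoeff_ne_zero.2 hf10
    · right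
      have : k - e = q1.natDegree := by omega
      rw [this]
      exact Polynomial.leadingCoeff_ne_zero.2 hq10
  have hEm : E ∈ apolar L d e := by
    refine ⟨by omega, fun p hp => ?_⟩
    obtain ⟨u, v, h1, h2, h3⟩ := exists_eq_mul_add_mul_of_isCoprime (a := r - e) (b := k - e)
      (N := d - e) (T := p) hcop (by omega) (by omega) hlead (by omega) (by omega)
    have h4 : E * p = f * u + q * v := by
      rw [h1]
      conv_rhs => rw [hf1, hq1]
      ring
    have h5 : L (f * u) = 0 := by
      rcases h2 with rfl | h2
      · simp
      · exact hf.2 u (by omega)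
    have h6 : L (q * v) = 0 := by
      rcases h3 with rfl | h3
      · simp
      · exact hq.2 v (by omega)
    rw [h4, map_add, h5, h6, add_zero]
  have her : ¬ e < r := fun h => hg0 (hmin e h E hEm)
  refine ⟨?_, by omega⟩
  have hf1d : f1.natDegree = 0 := by omega
  have hu : IsUnit f1 := by
    rw [Polynomial.isUnit_iff_degree_eq_zero, Polynomial.degree_eq_natDegree hf10, hf1d]; rfl
  rw [hf1, hq1]
  exact (hu.mul_right_dvd).2 (dvd_mul_right _ _)

/-- A general member of a pencil of binary forms without base points is squarefree. -/
lemma finite_setOf_not_squarefree_add_smul {G B : ℂ[X]} {k : ℕ} (hk : 0 < k)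
    (hGB : IsCoprime G B) (hG : G.natDegree ≤ k) (hB : B.natDegree ≤ k)
    (hlead : G.coeff k ≠ 0 ∨ B.coeff k ≠ 0) :
    {t : ℂ | ¬ (Squarefree (G + t • B) ∧ (G + t • B).natDegree = k)}.Finite := by
  classical
  set W := G * B.derivative - G.derivative * B with hW
  have key : ∀ P : ℂ[X], P ∣ P.derivative → P.natDegree = 0 := by
    intro P hP
    by_contra h
    have h1 : P.derivative ≠ 0 := fun h0 => h (Polynomial.derivative_eq_zero.1 h0)
    exact absurd (Polynomial.natDegree_le_of_dvd hP h1)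
      (not_le.2 (Polynomial.natDegree_derivative_lt h))
  have hW0 : W ≠ 0 := by
    intro h0
    have h1 : G * B.derivative = G.derivative * B := sub_eq_zero.1 h0
    have hGd : G.natDegree = 0 := key _ (hGB.dvd_of_dvd_mul_right ⟨_, h1.symm⟩)
    have hBd : B.natDegree = 0 :=
      key _ (hGB.symm.dvd_of_dvd_mul_left ⟨G.derivative, by rw [h1, mul_comm]⟩)
    rcases hlead with h | h
    · exact h (Polynomial.coeff_eq_zero_of_natDegree_lt (by omega))
    · exact h (Polynomial.coeff_eq_zero_of_natDegree_lt (by omega))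
  refine ((W.roots.toFinset.image fun z => -(G.eval z) / B.eval z) ∪
    {-(G.coeff k) / B.coeff k}).finite_toSet.subset ?_
  intro t ht
  simp only [Finset.coe_union, Finset.coe_image, Finset.coe_singleton, Set.mem_union,
    Set.mem_image, Finset.mem_coe, Multiset.mem_toFinset, Set.mem_singleton_iff]
  by_cases hd : (G + t • B).natDegree = k
  · left
    have hsq : ¬ Squarefree (G + t • B) := fun h => ht ⟨h, hd⟩
    have hP0 : G + t • B ≠ 0 := by
      intro h0; rw [h0] at hd; simp at hd; omega
    rw [squarefree_iff_irreducible_sq_not_dvd_of_ne_zero hP0] at hsq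
    push Not at hsq
    obtain ⟨x, hx, y, hy⟩ := hsq
    obtain ⟨z, hz⟩ := IsAlgClosed.exists_root x
      (by have := Polynomial.degree_pos_of_irreducible hx; exact this.ne')
    have hz' : x.eval z = 0 := hz
    have e1 : G.eval z + t * B.eval z = 0 := by
      have := congrArg (Polynomial.eval z) hy
      simpa [hz'] using this
    have e2 : G.derivative.eval z + t * B.derivative.eval z = 0 := by
      have := congrArg (fun p => Polynomial.eval z (Polynomial.derivative p)) hy
      simpa [hz'] using this
    have hBz : B.eval z ≠ 0 := by
      intro h0
      have h1 : G.eval z = 0 := by simpa [h0] using e1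
      obtain ⟨u, v, huv⟩ := hGB
      have := congrArg (Polynomial.eval z) huv
      simp [h0, h1] at this
    refine ⟨z, ?_, ?_⟩
    · rw [Polynomial.mem_roots hW0, Polynomial.IsRoot, hW]
      simp only [Polynomial.eval_sub, Polynomial.eval_mul]
      linear_combination (B.derivative.eval z) * e1 - (B.eval z) * e2
    · field_simp
      linear_combination -e1
  · right
    have hc : G.coeff k + t * B.coeff k = 0 := by
      by_contra h
      refine hd (le_antisymm ?_ (Polynomial.le_natDegree_of_ne_zero (by simpa using h)))
      exact Polynomial.natDegree_add_le_of_degree_le hG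
        ((Polynomial.natDegree_smul_le _ _).trans hB)
    have hBk : B.coeff k ≠ 0 := by
      intro h0
      rcases hlead with h | h
      · exact h (by simpa [h0] using hc)
      · exact h h0
    field_simp
    linear_combination hc

/-- A functional apolar to a squarefree polynomial is a combination of evaluations at its roots. -/
lemma exists_eq_sum_eval_of_mem_apolar {L : ℂ[X] →ₗ[ℂ] ℂ} {d k : ℕ} {P : ℂ[X]}
    (hP : P ∈ apolar L d k) (hPk : P.natDegree = k) (hsq : Squarefree P) :
    ∃ w z : Fin k → ℂ, ∀ p : ℂ[X], p.natDegree ≤ d → L p = ∑ i, w i * p.eval (z i) := by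
  classical
  have hP0 : P ≠ 0 := hsq.ne_zero
  set s := P.roots.toFinset with hs
  have hcard : s.card = k := by
    have hsep : P.Separable := PerfectField.separable_iff_squarefree.2 hsq
    rw [hs, Multiset.toFinset_card_of_nodup (Polynomial.nodup_roots hsep),
      ← hPk, IsAlgClosed.card_roots_eq_natDegree]
  have hmain : ∀ p : ℂ[X], p.natDegree ≤ d →
      L p = ∑ z ∈ s, L (Lagrange.basis s id z) * p.eval z := by
    intro p hp
    have hdm := EuclideanDomain.div_add_mod p P
    have h1 : L (P * (p / P)) = 0 := by
      by_cases hpk : k ≤ p.natDegree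
      · refine hP.2 _ ?_
        by_cases hz : p / P = 0
        · rw [hz, Polynomial.natDegree_zero]
          omega
        have hle : P.degree ≤ p.degree :=
          not_lt.1 fun h => hz ((Polynomial.div_eq_zero_iff hP0).2 h)
        have hdeg := Polynomial.degree_add_div hP0 hle
        rw [← Polynomial.degree_mul] at hdeg
        have hnat := Polynomial.natDegree_eq_of_degree_eq hdeg
        rw [Polynomial.natDegree_mul hP0 hz] at hnat
        omega
      · have : p / P = 0 := (Polynomial.div_eq_zero_iff hP0).2
          (Polynomial.degree_lt_degree (by omega))
        simp [this]
    have h2 : p % P = Lagrange.interpolate s id (fun z => p.eval z) := by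
      refine Lagrange.eq_interpolate_of_eval_eq _ Function.injective_id.injOn ?_ ?_
      · rw [hcard, ← hPk, ← Polynomial.degree_eq_natDegree hP0]
        exact Polynomial.degree_mod_lt _ hP0
      · intro z hz
        have hz' : P.eval z = 0 := by
          have := (Polynomial.mem_roots hP0).1 (Multiset.mem_toFinset.1 hz)
          exact this
        conv_rhs => rw [← hdm]
        simp [hz']
    conv_lhs => rw [← hdm]
    rw [map_add, h1, zero_add, h2, Lagrange.interpolate_apply, map_sum]
    refine Finset.sum_congr rfl fun z _ => ?_
    rw [← Polynomial.smul_eq_C_mul, map_smul, smul_eq_mul, mul_comm]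
  let e := (Finset.equivFinOfCardEq hcard).symm
  refine ⟨fun i => L (Lagrange.basis s id (e i : ℂ)), fun i => (e i : ℂ), fun p hp => ?_⟩
  rw [hmain p hp, ← Finset.sum_coe_sort s (fun z => L (Lagrange.basis s id z) * p.eval z)]
  exact (Equiv.sum_comp e
    (fun z : s => L (Lagrange.basis s id (z : ℂ)) * p.eval (z : ℂ))).symm

/-! ### Squarefreeness of binary forms -/

lemma irreducible_X_sub_C_mul_X (z : ℂ) :
    Irreducible (X 0 - C z * X 1 : MvPolynomial (Fin 2) ℂ) := by
  have hc : coeff (Finsupp.single 0 1) (X 0 - C z * X 1 : MvPolynomial (Fin 2) ℂ) = 1 := by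
    rw [coeff_sub, coeff_C_mul, coeff_X, coeff_X]
    simp [Finsupp.single_left_inj]
  refine irreducible_of_totalDegree_eq_one ?_ fun x hx => ?_
  · refine IsHomogeneous.totalDegree (n := 1) ?_ ?_
    · refine (isHomogeneous_X ℂ 0).sub ?_
      simpa using (isHomogeneous_C (Fin 2) z).mul (isHomogeneous_X ℂ (1 : Fin 2))
    · intro h0
      rw [h0, coeff_zero] at hc
      exact zero_ne_one hc
  · have := hx (Finsupp.single 0 1)
    rw [hc] at this
    exact isUnit_of_dvd_one this

lemma exists_dvd_linear_of_dvd_homogenize {p : MvPolynomial (Fin 2) ℂ} (hp : Prime p) :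
    ∀ (r : ℕ) (f : ℂ[X]), f ≠ 0 → f.natDegree ≤ r → p ∣ f.homogenize r →
      p ∣ X 1 ∨ ∃ z : ℂ, p ∣ X 0 - C z * X 1 := by
  have hconst : ∀ (r : ℕ) (f : ℂ[X]), f ≠ 0 → f.natDegree = 0 → p ∣ f.homogenize r →
      p ∣ X 1 := by
    intro r f hf0 hd hdvd
    obtain ⟨c, rfl⟩ : ∃ c, f = Polynomial.C c := ⟨_, Polynomial.eq_C_of_natDegree_eq_zero hd⟩
    have hc : c ≠ 0 := by rintro rfl; simp at hf0
    rw [Polynomial.homogenize_C] at hdvd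
    rcases hp.dvd_or_dvd hdvd with h | h
    · exact absurd (isUnit_of_dvd_unit h ((isUnit_iff_ne_zero.2 hc).map C)) hp.not_isUnit
    · exact hp.dvd_of_dvd_pow h
  intro r
  induction r with
  | zero =>
    intro f hf0 hd hdvd
    exact Or.inl (hconst 0 f hf0 (by omega) hdvd)
  | succ r ih =>
    intro f hf0 hd hdvd
    by_cases hd0 : f.natDegree = 0
    · exact Or.inl (hconst _ f hf0 hd0 hdvd)
    obtain ⟨z, hz⟩ := IsAlgClosed.exists_root f
      (fun h => hd0 (Polynomial.natDegree_eq_of_degree_eq_some h))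
    obtain ⟨g, rfl⟩ := Polynomial.dvd_iff_isRoot.2 hz
    have hg0 : g ≠ 0 := right_ne_zero_of_mul hf0
    rw [Polynomial.natDegree_mul (Polynomial.X_sub_C_ne_zero z) hg0,
      Polynomial.natDegree_X_sub_C] at hd
    rw [add_comm r 1, Polynomial.homogenize_mul _ _ (by simp) (by omega)] at hdvd
    rcases hp.dvd_or_dvd hdvd with h | h
    · right
      refine ⟨z, ?_⟩
      have : (Polynomial.X - Polynomial.C z : ℂ[X]).homogenize 1 = X 0 - C z * X 1 := by
        rw [sub_eq_add_neg, ← Polynomial.C_neg, Polynomial.homogenize_add]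
        simp [sub_eq_add_neg]
      rwa [this] at h
    · exact ih g hg0 (by omega) h

lemma squarefree_homogenize {f : ℂ[X]} {r : ℕ} (hf : Squarefree f) (hfr : f.natDegree ≤ r)
    (hrf : r ≤ f.natDegree + 1) : Squarefree (f.homogenize r) := by
  have hf0 := hf.ne_zero
  have hF0 : f.homogenize r ≠ 0 := fun h => hf0 ((Polynomial.homogenize_eq_zero_iff hfr).1 h)
  rw [squarefree_iff_irreducible_sq_not_dvd_of_ne_zero hF0]
  intro p hp hdvd
  rcases exists_dvd_linear_of_dvd_homogenize hp.prime r f hf0 hfr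
    (dvd_of_mul_right_dvd hdvd) with h | ⟨z, h⟩
  · have ha : Associated p (X 1) := hp.associated_of_dvd (X_prime).irreducible h
    obtain ⟨G, hG⟩ := ((ha.mul_mul ha).dvd_iff_dvd_left).1 hdvd
    have hc := Polynomial.coeff_homogenize f r
      (Finsupp.single 0 f.natDegree + Finsupp.single 1 (r - f.natDegree))
    rw [hG, mul_assoc, coeff_X_mul', coeff_X_mul'] at hc
    have h1 : f.natDegree + (r - f.natDegree) = r := by omega
    have h2 : r - f.natDegree - 1 = 0 := by omega
    simp [h1, h2] at hc
    exact hf0 (Polynomial.leadingCoeff_eq_zero.1 hc.symm)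
  · have ha := hp.associated_of_dvd (irreducible_X_sub_C_mul_X z) h
    have h2 := map_dvd (aeval ![(Polynomial.X : ℂ[X]), 1])
      (((ha.mul_mul ha).dvd_iff_dvd_left).1 hdvd)
    rw [Polynomial.aeval_homogenize_X_one _ hfr] at h2
    have h3 : (Polynomial.X - Polynomial.C z) * (Polynomial.X - Polynomial.C z) ∣ f := by
      simpa using h2
    exact Polynomial.not_isUnit_X_sub_C z (hf _ h3)

/-- The polynomial with prescribed coefficients. -/
def coeffPoly (k : ℕ) : (Fin (k + 1) → ℂ) →ₗ[ℂ] ℂ[X] :=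
  (Polynomial.degreeLT ℂ (k + 1)).subtype ∘ₗ
    (Polynomial.degreeLTEquiv ℂ (k + 1)).symm.toLinearMap

lemma coeffPoly_apply (k : ℕ) (f : Fin (k + 1) → ℂ) :
    coeffPoly k f = ∑ j : Fin (k + 1), Polynomial.monomial (j : ℕ) (f j) := rfl

lemma coeffPoly_injective (k : ℕ) : Function.Injective (coeffPoly k) :=
  Subtype.val_injective.comp (Polynomial.degreeLTEquiv ℂ (k + 1)).symm.injective

lemma natDegree_coeffPoly_le (k : ℕ) (f : Fin (k + 1) → ℂ) : (coeffPoly k f).natDegree ≤ k := by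
  rw [coeffPoly_apply]
  refine Polynomial.natDegree_sum_le_of_forall_le _ _ fun j _ => ?_
  exact (Polynomial.natDegree_monomial_le _).trans (by omega)

lemma exists_coeffPoly_eq {k : ℕ} {p : ℂ[X]} (hp : p.natDegree ≤ k) :
    ∃ f, coeffPoly k f = p := by
  have hp' : p ∈ Polynomial.degreeLT ℂ (k + 1) := by
    rw [Polynomial.mem_degreeLT]
    exact lt_of_le_of_lt Polynomial.degree_le_natDegree (by exact_mod_cast Nat.lt_succ_of_le hp)
  refine ⟨Polynomial.degreeLTEquiv ℂ (k + 1) ⟨p, hp'⟩, ?_⟩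
  simp [coeffPoly]

lemma squarefree_binForm {r : ℕ} {f : Fin (r + 1) → ℂ} (hf : Squarefree (coeffPoly r f))
    (hr : r ≤ (coeffPoly r f).natDegree + 1) : Squarefree (binForm r f) := by
  have hsq := squarefree_homogenize hf (natDegree_coeffPoly_le r f) hr
  have hmap : renameEquiv ℂ (Equiv.swap (0 : Fin 2) 1) (binForm r f) =
      (coeffPoly r f).homogenize r := by
    rw [coeffPoly_apply, Polynomial.homogenize_finsetSum, binForm, map_sum]
    refine Finset.sum_congr rfl fun j _ => ?_
    rw [← Polynomial.C_mul_X_pow_eq_monomial, Polynomial.homogenize_C_mul,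
      Polynomial.homogenize_X_pow (by omega)]
    simp
    ring
  intro y hy
  rw [← hmap] at hsq
  have := hsq (renameEquiv ℂ (Equiv.swap (0 : Fin 2) 1) y) (by
    rw [← map_mul]; exact map_dvd _ hy)
  exact (MulEquiv.isUnit_map _).1 this

/-! ### Catalecticant matrices and apolar forms -/

/-- A parameter vector extended by zero. -/
def paramSeq {d : ℕ} (h : Fin (d + 1) → ℂ) (i : ℕ) : ℂ :=
  if hi : i < d + 1 then h ⟨i, hi⟩ else 0

lemma paramSeq_of_lt {d : ℕ} (h : Fin (d + 1) → ℂ) {i : ℕ} (hi : i < d + 1) :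
    paramSeq h i = h ⟨i, hi⟩ := dif_pos hi

lemma hMat_apply {d k : ℕ} (h : Fin (d + 1) → ℂ) (i : Fin (d - k + 1)) (j : Fin (k + 1)) :
    hMat d k h i j = paramSeq h (i + j) := rfl

/-- The functional on polynomials attached to a parameter vector. -/
def paramFunctional {d : ℕ} (h : Fin (d + 1) → ℂ) : ℂ[X] →ₗ[ℂ] ℂ :=
  momentFunctional (paramSeq h)

lemma paramFunctional_eq_sum {d : ℕ} (h : Fin (d + 1) → ℂ) {p : ℂ[X]} (hp : p.natDegree ≤ d) :
    paramFunctional h p = ∑ l : Fin (d + 1), p.coeff l * h l := by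
  conv_lhs => rw [p.as_sum_range' (d + 1) (by omega)]
  rw [map_sum, Finset.sum_range]
  refine Finset.sum_congr rfl fun l _ => ?_
  rw [← Polynomial.C_mul_X_pow_eq_monomial, ← Polynomial.smul_eq_C_mul, map_smul,
    paramFunctional, momentFunctional_X_pow, smul_eq_mul, paramSeq_of_lt h l.isLt]

lemma coeffPoly_mem_apolar_iff {d k : ℕ} (h : Fin (d + 1) → ℂ) (hk : k ≤ d)
    (f : Fin (k + 1) → ℂ) :
    coeffPoly k f ∈ apolar (paramFunctional h) d k ↔ (hMat d k h).mulVec f = 0 := by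
  have key : ∀ i : ℕ, paramFunctional h (coeffPoly k f * Polynomial.X ^ i) =
      ∑ j : Fin (k + 1), paramSeq h (i + j) * f j := by
    intro i
    rw [coeffPoly_apply, Finset.sum_mul, map_sum]
    refine Finset.sum_congr rfl fun j _ => ?_
    rw [← Polynomial.C_mul_X_pow_eq_monomial, mul_assoc, ← pow_add, ← Polynomial.smul_eq_C_mul,
      map_smul, paramFunctional, momentFunctional_X_pow, smul_eq_mul, mul_comm, add_comm]
  rw [mem_apolar_iff_X_pow, and_iff_right (natDegree_coeffPoly_le k f)]
  simp only [key]
  constructor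
  · intro hf
    funext i
    exact hf i (by omega)
  · intro hf i hi
    exact congrFun hf ⟨i, by omega⟩

lemma map_coeffPoly_ker {d k : ℕ} (h : Fin (d + 1) → ℂ) (hk : k ≤ d) :
    (LinearMap.ker (hMat d k h).mulVecLin).map (coeffPoly k) =
      apolar (paramFunctional h) d k := by
  ext p
  constructor
  · rintro ⟨f, hf, rfl⟩
    exact (coeffPoly_mem_apolar_iff h hk f).2 hf
  · intro hp
    obtain ⟨f, rfl⟩ := exists_coeffPoly_eq hp.1
    exact ⟨f, (coeffPoly_mem_apolar_iff h hk f).1 hp, rfl⟩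

lemma finiteDimensional_apolar {d k : ℕ} (h : Fin (d + 1) → ℂ) (hk : k ≤ d) :
    FiniteDimensional ℂ (apolar (paramFunctional h) d k) := by
  rw [← map_coeffPoly_ker h hk]
  infer_instance

lemma rank_add_finrank_apolar {d k : ℕ} (h : Fin (d + 1) → ℂ) (hk : k ≤ d) :
    (hMat d k h).rank + Module.finrank ℂ (apolar (paramFunctional h) d k) = k + 1 := by
  rw [← map_coeffPoly_ker h hk,
    ← (Submodule.equivMapOfInjective _ (coeffPoly_injective k) _).finrank_eq, Matrix.rank,
    LinearMap.finrank_range_add_finrank_ker, Module.finrank_fin_fun]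

/-- The multiples of `e` by polynomials of degree at most `l`. -/
def multiples (e : ℂ[X]) (l : ℕ) : Submodule ℂ ℂ[X] :=
  LinearMap.range (LinearMap.mulLeft ℂ e ∘ₗ coeffPoly l)

lemma mul_mem_multiples (e : ℂ[X]) {l : ℕ} {a : ℂ[X]} (ha : a.natDegree ≤ l) :
    e * a ∈ multiples e l := by
  obtain ⟨f, rfl⟩ := exists_coeffPoly_eq ha
  exact ⟨f, rfl⟩

instance (e : ℂ[X]) (l : ℕ) : FiniteDimensional ℂ (multiples e l) := by
  unfold multiples; infer_instance

lemma finrank_multiples {e : ℂ[X]} (he : e ≠ 0) (l : ℕ) :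
    Module.finrank ℂ (multiples e l) = l + 1 := by
  have hinj : Function.Injective (LinearMap.mulLeft ℂ e ∘ₗ coeffPoly l) := by
    rw [LinearMap.coe_comp]
    exact (mul_right_injective₀ he).comp (coeffPoly_injective l)
  rw [multiples, LinearMap.finrank_range_of_inj hinj, Module.finrank_fin_fun]

lemma eq_zero_of_mem_apolar_of_lt_rank {d s j : ℕ} (h : Fin (d + 1) → ℂ) (hs : s ≤ d)
    (hj : j < (hMat d s h).rank) {e : ℂ[X]} (he : e ∈ apolar (paramFunctional h) d j) :
    e = 0 := by
  by_contra he0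
  have hrank := rank_add_finrank_apolar h hs
  have hjs : j ≤ s := by omega
  have := finiteDimensional_apolar h hs
  have hle : multiples e (s - j) ≤ apolar (paramFunctional h) d s := by
    rintro _ ⟨a, rfl⟩
    have := mul_mem_apolar he (natDegree_coeffPoly_le (s - j) a)
    rwa [Nat.add_sub_cancel' hjs] at this
  have := Submodule.finrank_mono hle
  rw [finrank_multiples he0] at this
  omega

lemma mem_multiples_of_dvd {f q : ℂ[X]} {r k : ℕ} (hf0 : f ≠ 0) (hfr : f.natDegree ≤ r)
    (hqk : q.natDegree ≤ k) (hrk : r ≤ k) (hdvd : f ∣ q)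
    (hdeg : r - f.natDegree ≤ k - q.natDegree) : q ∈ multiples f (k - r) := by
  obtain ⟨a, rfl⟩ := hdvd
  refine mul_mem_multiples f ?_
  by_cases ha : a = 0
  · simp [ha]
  rw [Polynomial.natDegree_mul hf0 ha] at hdeg hqk
  omega

/-- The catalecticant matrices of intermediate format all have the same rank. -/
lemma le_rank_hMat {d r k : ℕ} {h : Fin (d + 1) → ℂ} {f : ℂ[X]}
    (hmin : ∀ j < r, ∀ e ∈ apolar (paramFunctional h) d j, e = 0)
    (hf : f ∈ apolar (paramFunctional h) d r) (hf0 : f ≠ 0) (hrd : r ≤ d) (hkd : k ≤ d)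
    (hrk : r ≤ k + 1) (hrk' : r + k ≤ d + 1) : r ≤ (hMat d k h).rank := by
  have hrank := rank_add_finrank_apolar h hkd
  have := finiteDimensional_apolar h hkd
  rcases Nat.lt_or_ge k r with hkr | hkr
  · have hbot : apolar (paramFunctional h) d k = ⊥ := by
      rw [Submodule.eq_bot_iff]
      exact hmin k hkr
    rw [hbot, finrank_bot] at hrank
    omega
  · have hle : apolar (paramFunctional h) d k ≤ multiples f (k - r) := by
      intro q hq
      by_cases hq0 : q = 0
      · rw [hq0]; exact zero_mem _
      obtain ⟨h1, h2⟩ := dvd_of_mem_apolar hmin hf hq hf0 hq0 hrd (by omega)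
      exact mem_multiples_of_dvd hf0 hf.1 hq.1 hkr h1 h2
    have := Submodule.finrank_mono hle
    rw [finrank_multiples hf0] at this
    omega

/-- The apolar ideal contains a squarefree form of the complementary degree. -/
lemma exists_squarefree_mem_apolar {d r : ℕ} {h : Fin (d + 1) → ℂ} {f : ℂ[X]}
    (hmin : ∀ j < r, ∀ e ∈ apolar (paramFunctional h) d j, e = 0)
    (hf : f ∈ apolar (paramFunctional h) d r) (hf0 : f ≠ 0) (hr : 2 ≤ r) (hrd : 2 * r ≤ d + 1) :
    ∃ P ∈ apolar (paramFunctional h) d (d - r + 2),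
      P.natDegree = d - r + 2 ∧ Squarefree P := by
  obtain ⟨k, hk⟩ : ∃ k, k = d - r + 2 := ⟨_, rfl⟩
  rw [← hk]
  have hkd : k ≤ d := by omega
  obtain ⟨g, hg, hgf⟩ : ∃ g ∈ apolar (paramFunctional h) d k, g ∉ multiples f (k - r) := by
    by_contra! hcon
    have := Submodule.finrank_mono (show apolar (paramFunctional h) d k ≤ _ from hcon)
    rw [finrank_multiples hf0] at this
    have hrank := rank_add_finrank_apolar h hkd
    have := Matrix.rank_le_height (hMat d k h)
    omega
  have hg0 : g ≠ 0 := by rintro rfl; exact hgf (zero_mem _)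
  have hgcd : (gcd f g).natDegree + min (r - f.natDegree) (k - g.natDegree) = 0 := by
    by_contra hne
    obtain ⟨h1, h2⟩ := dvd_of_mem_apolar hmin hf hg hf0 hg0 (by omega) (by omega)
    exact hgf (mem_multiples_of_dvd hf0 hf.1 hg.1 (by omega) h1 h2)
  have hgcd0 : gcd f g ≠ 0 := fun h0 => hf0 ((gcd_eq_zero_iff _ _).1 h0).1
  have hcop : IsCoprime g f := by
    refine IsCoprime.symm ?_
    rw [← gcd_isUnit_iff, Polynomial.isUnit_iff_degree_eq_zero,
      Polynomial.degree_eq_natDegree hgcd0]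
    have : (gcd f g).natDegree = 0 := by omega
    rw [this]; rfl
  obtain ⟨w, hw⟩ : ∃ w, g.eval w ≠ 0 := by
    by_contra! hcon
    exact hg0 (Polynomial.funext fun x => by simpa using hcon x)
  set a : ℂ[X] := (Polynomial.X - Polynomial.C w) ^ (k - r) with ha
  have hadeg : a.natDegree = k - r := by rw [ha]; simp
  have ha0 : a.Monic := (Polynomial.monic_X_sub_C w).pow _
  have hfa := mul_mem_apolar hf hadeg.le
  have hrk : r + (k - r) = k := by omega
  rw [hrk] at hfa
  have hcopa : IsCoprime g a := by
    refine IsCoprime.pow_right (IsCoprime.symm ?_)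
    refine (Polynomial.irreducible_X_sub_C w).coprime_iff_not_dvd.2 fun hd => hw ?_
    exact Polynomial.dvd_iff_isRoot.1 hd
  have hlead : g.coeff k ≠ 0 ∨ (f * a).coeff k ≠ 0 := by
    have hfr := hf.1
    have hgk := hg.1
    rcases Nat.eq_zero_of_add_eq_zero_left hgcd |> min_eq_iff.1 with ⟨h1, -⟩ | ⟨h1, -⟩
    · right
      have : k = (f * a).natDegree := by
        rw [Polynomial.natDegree_mul hf0 ha0.ne_zero]; omega
      rw [this]
      exact Polynomial.leadingCoeff_ne_zero.2 (mul_ne_zero hf0 ha0.ne_zero)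
    · left
      have : k = g.natDegree := by omega
      rw [this]
      exact Polynomial.leadingCoeff_ne_zero.2 hg0
  have hfin := finite_setOf_not_squarefree_add_smul (k := k) (by omega)
    (hcop.mul_right hcopa) hg.1 hfa.1 hlead
  obtain ⟨t, ht⟩ := hfin.exists_notMem
  rw [Set.mem_ofPred_eq, not_not] at ht
  exact ⟨g + t • (f * a), add_mem hg (Submodule.smul_mem _ t hfa), ht.2, ht.1⟩

/-! ### Approximation by functionals with squarefree apolar forms -/

/-- The matrix, in monomial bases, of multiplication by `P` from polynomials of degree at most
`d - r` to polynomials of degree at most `d`, acting on row vectors. -/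
def mulMatrix (d r : ℕ) (P : ℂ[X]) : Matrix (Fin (d - r + 1)) (Fin (d + 1)) ℂ :=
  Matrix.of fun i l => (P * Polynomial.X ^ (i : ℕ)).coeff l

lemma mem_apolar_iff_mulMatrix {d r : ℕ} (h : Fin (d + 1) → ℂ) {P : ℂ[X]} (hP : P.natDegree ≤ r)
    (hr : r ≤ d) :
    P ∈ apolar (paramFunctional h) d r ↔ (mulMatrix d r P).mulVec h = 0 := by
  rw [mem_apolar_iff_X_pow, and_iff_right hP]
  have key : ∀ i : ℕ, i + r ≤ d → paramFunctional h (P * Polynomial.X ^ i) =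
      ∑ l : Fin (d + 1), (P * Polynomial.X ^ i).coeff l * h l := by
    intro i hi
    refine paramFunctional_eq_sum h ?_
    have := Polynomial.natDegree_mul_le (p := P) (q := Polynomial.X ^ i)
    rw [Polynomial.natDegree_X_pow] at this
    omega
  constructor
  · intro hf
    funext i
    exact (key i (by omega)).symm.trans (hf i (by omega))
  · intro hf i hi
    exact (key i hi).trans (congrFun hf ⟨i, by omega⟩)

lemma vecMul_mulMatrix_injective {d r : ℕ} {P : ℂ[X]} (hP : P.natDegree ≤ r) (hP0 : P ≠ 0)
    (hr : r ≤ d) : Function.Injective (mulMatrix d r P).vecMul := by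
  have key : ∀ c : Fin (d - r + 1) → ℂ, (mulMatrix d r P).vecMulLinear c = 0 → c = 0 := by
    intro c hc
    have hmul : P * coeffPoly (d - r) c = 0 := by
      ext l
      rw [Polynomial.coeff_zero]
      by_cases hl : l < d + 1
      · have := congrFun hc ⟨l, hl⟩
        rw [coeffPoly_apply, Finset.mul_sum, Polynomial.finsetSum_coeff]
        refine Eq.trans (Finset.sum_congr rfl fun i _ => ?_) this
        rw [← Polynomial.C_mul_X_pow_eq_monomial, mul_left_comm, Polynomial.coeff_C_mul]
        rfl
      · refine Polynomial.coeff_eq_zero_of_natDegree_lt ?_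
        have h1 := Polynomial.natDegree_mul_le (p := P) (q := coeffPoly (d - r) c)
        have h2 := natDegree_coeffPoly_le (d - r) c
        omega
    have := (mul_eq_zero.1 hmul).resolve_left hP0
    exact coeffPoly_injective _ (by rw [this, map_zero])
  exact (injective_iff_map_eq_zero (mulMatrix d r P).vecMulLinear).2 key

open Matrix Topology in
/-- A functional apolar to a form of degree `r` is a limit of functionals apolar to squarefree
forms of degree `r`. -/
lemma mem_closure_setOf_squarefree_apolar {d r : ℕ} {h : Fin (d + 1) → ℂ} {f : ℂ[X]}
    (hf : f ∈ apolar (paramFunctional h) d r) (hf0 : f ≠ 0) (hr : 0 < r) (hrd : r ≤ d) :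
    h ∈ closure {h' : Fin (d + 1) → ℂ |
      ∃ P ∈ apolar (paramFunctional h') d r, P.natDegree = r ∧ Squarefree P} := by
  obtain ⟨w, hw⟩ : ∃ w, f.eval w ≠ 0 := by
    by_contra! hcon
    exact hf0 (Polynomial.funext fun x => by simpa using hcon x)
  set b : ℂ[X] := (Polynomial.X - Polynomial.C w) ^ r with hb
  have hbdeg : b.natDegree = r := by rw [hb]; simp
  have hbm : b.Monic := (Polynomial.monic_X_sub_C w).pow _
  have hcop : IsCoprime f b := by
    refine IsCoprime.pow_right (IsCoprime.symm ?_)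
    refine (Polynomial.irreducible_X_sub_C w).coprime_iff_not_dvd.2 fun hd => hw ?_
    exact Polynomial.dvd_iff_isRoot.1 hd
  have hfin := finite_setOf_not_squarefree_add_smul hr hcop hf.1 hbdeg.le
    (Or.inr (by rw [← hbdeg]; exact Polynomial.leadingCoeff_ne_zero.2 hbm.ne_zero))
  let A : ℂ → Matrix (Fin (d - r + 1)) (Fin (d + 1)) ℂ := fun t => mulMatrix d r (f + t • b)
  have hA : Continuous A := by
    refine continuous_matrix fun i l => ?_
    simp only [A, mulMatrix, Matrix.of_apply, add_mul, smul_mul_assoc, Polynomial.coeff_add,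
      Polynomial.coeff_smul, smul_eq_mul]
    fun_prop
  have hdet : ∀ t, f + t • b ≠ 0 → (f + t • b).natDegree ≤ r → (A t * (A t)ᴴ).det ≠ 0 := by
    intro t h0 hd
    open scoped ComplexOrder in
    exact (Matrix.PosDef.mul_conjTranspose_self (A t)
      (vecMul_mulMatrix_injective hd h0 hrd)).det_pos.ne'
  let η : ℂ → Fin (d + 1) → ℂ := fun t =>
    h - (A t)ᴴ *ᵥ ((A t * (A t)ᴴ)⁻¹ *ᵥ (A t *ᵥ h))
  have hη0 : η 0 = h := by
    have : A 0 *ᵥ h = 0 := by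
      have := (mem_apolar_iff_mulMatrix h hf.1 hrd).1 hf
      simpa [A] using this
    simp only [η, this, Matrix.mulVec_zero, sub_zero]
  have hηc : ContinuousAt η 0 := by
    have hgram : Continuous fun t => A t * (A t)ᴴ := hA.matrix_mul hA.matrix_conjTranspose
    have hinv : ContinuousAt (fun t => (A t * (A t)ᴴ)⁻¹) 0 := by
      refine ContinuousAt.comp (g := Inv.inv) (continuousAt_matrix_inv _ ?_) hgram.continuousAt
      rw [Ring.inverse_eq_inv']
      exact continuousAt_inv₀ (hdet 0 (by simpa using hf0) (by simpa using hf.1))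
    have hmv : ∀ {p q : ℕ}, Continuous fun x : Matrix (Fin p) (Fin q) ℂ × (Fin q → ℂ) =>
        x.1 *ᵥ x.2 := fun {p q} => Continuous.matrix_mulVec continuous_fst continuous_snd
    refine continuousAt_const.sub ?_
    refine hmv.continuousAt.comp (f := fun t => ((A t)ᴴ, (A t * (A t)ᴴ)⁻¹ *ᵥ (A t *ᵥ h)))
      (hA.matrix_conjTranspose.continuousAt.prodMk ?_)
    exact hmv.continuousAt.comp (f := fun t => ((A t * (A t)ᴴ)⁻¹, A t *ᵥ h))
      (hinv.prodMk (hA.matrix_mulVec continuous_const).continuousAt)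
  have hlim : Filter.Tendsto η (𝓝[≠] 0) (𝓝 h) := by
    have := hηc.tendsto.mono_left (nhdsWithin_le_nhds (s := {0}ᶜ))
    rwa [hη0] at this
  refine mem_closure_of_tendsto hlim ?_
  have hopen := (hfin.subset (Set.sdiff_subset (t := {0}))).isClosed.isOpen_compl
  have hev := nhdsWithin_le_nhds (s := {(0 : ℂ)}ᶜ) (hopen.mem_nhds (x := 0) (by simp))
  filter_upwards [hev, self_mem_nhdsWithin] with t ht ht0
  have hgood : Squarefree (f + t • b) ∧ (f + t • b).natDegree = r := by
    by_contra hcon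
    exact ht ⟨hcon, ht0⟩
  refine ⟨f + t • b, ?_, hgood.2, hgood.1⟩
  rw [mem_apolar_iff_mulMatrix _ hgood.2.le hrd]
  change A t *ᵥ η t = 0
  have hu : IsUnit (A t * (A t)ᴴ).det :=
    isUnit_iff_ne_zero.2 (hdet t hgood.1.ne_zero hgood.2.le)
  simp only [η]
  rw [Matrix.mulVec_sub, Matrix.mulVec_mulVec, Matrix.mulVec_mulVec,
    Matrix.mul_nonsing_inv _ hu, Matrix.one_mulVec, sub_self]

/-! ### Hankel tensors -/

/-- The greedy filling of slots `0, 1, 2, …`, of capacity `n - 1` each, with total `a`. -/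
def greedyIndex {n : ℕ} (hn : 0 < n) (a t : ℕ) : Fin n :=
  ⟨min (n - 1) (a - (n - 1) * t), by omega⟩

lemma sum_greedyIndex {n : ℕ} (hn : 0 < n) (a M : ℕ) :
    ∑ t ∈ Finset.range M, (greedyIndex hn a t : ℕ) = min a ((n - 1) * M) := by
  induction M with
  | zero => simp
  | succ M ih =>
    rw [Finset.sum_range_succ, ih, Nat.mul_succ]
    simp only [greedyIndex]
    omega

lemma exists_sum_eq {n m e : ℕ} (hn : 0 < n) (he : e ≤ (n - 1) * m) :
    ∃ i : Fin m → Fin n, ∑ j, (i j : ℕ) = e := by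
  refine ⟨fun t => greedyIndex hn e t, ?_⟩
  rw [Fin.sum_univ_eq_sum_range (fun t => (greedyIndex hn e t : ℕ)) m, sum_greedyIndex]
  exact min_eq_left he

lemma sum_index_le {m n : ℕ} (i : Fin m → Fin n) : ∑ j, (i j : ℕ) ≤ (n - 1) * m := by
  have h1 : ∑ j, (i j : ℕ) ≤ ∑ _j : Fin m, (n - 1) :=
    Finset.sum_le_sum fun j _ => Nat.le_pred_of_lt (i j).isLt
  simpa [mul_comm] using h1

lemma IsHankel.apply_eq_paramSeq {m n : ℕ} {T : Tensor m n} {h : Fin ((n - 1) * m + 1) → ℂ}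
    (hT : IsHankel T h) (i : Fin m → Fin n) : T i = paramSeq h (∑ j, (i j : ℕ)) := by
  rw [hT i, paramSeq_of_lt]

lemma prod_vand {m n : ℕ} (a b : ℂ) (i : Fin m → Fin n) :
    ∏ j, vand n a b (i j) =
      a ^ ((n - 1) * m - ∑ j, (i j : ℕ)) * b ^ (∑ j, (i j : ℕ)) := by
  simp only [vand]
  rw [Finset.prod_mul_distrib, Finset.prod_pow_eq_pow_sum, Finset.prod_pow_eq_pow_sum]
  congr 2
  have hle : ∀ j ∈ Finset.univ, (i j : ℕ) ≤ n - 1 := fun j _ => Nat.le_pred_of_lt (i j).isLt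
  rw [Finset.sum_tsub_distrib _ hle]
  simp [mul_comm]

lemma mem_vandSet_iff {m n R : ℕ} (hn : 0 < n) {T : Tensor m n}
    {h : Fin ((n - 1) * m + 1) → ℂ} (hT : IsHankel T h) :
    T ∈ vandSet m n R ↔ ∃ ab : Fin R → ℂ × ℂ, ∀ e ≤ (n - 1) * m,
      paramSeq h e = ∑ k, (ab k).1 ^ ((n - 1) * m - e) * (ab k).2 ^ e := by
  refine exists_congr fun ab => ⟨fun hab e he => ?_, fun hab i => ?_⟩
  · obtain ⟨i, rfl⟩ := exists_sum_eq hn he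
    rw [← hT.apply_eq_paramSeq, hab i]
    exact Finset.sum_congr rfl fun k _ => prod_vand _ _ i
  · rw [hT.apply_eq_paramSeq, hab _ (sum_index_le i)]
    exact Finset.sum_congr rfl fun k _ => (prod_vand _ _ i).symm

/-- A squarefree apolar form yields a Vandermonde decomposition. -/
lemma mem_vandSet_of_squarefree_apolar {m n k : ℕ} (hn : 0 < n) {T : Tensor m n}
    {h : Fin ((n - 1) * m + 1) → ℂ} (hT : IsHankel T h) (hd : 0 < (n - 1) * m) {P : ℂ[X]}
    (hP : P ∈ apolar (paramFunctional h) ((n - 1) * m) k) (hPk : P.natDegree = k)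
    (hsq : Squarefree P) : T ∈ vandSet m n k := by
  obtain ⟨w, z, hwz⟩ := exists_eq_sum_eval_of_mem_apolar hP hPk hsq
  choose c hc using fun i => IsAlgClosed.exists_pow_nat_eq (w i) hd
  rw [mem_vandSet_iff hn hT]
  refine ⟨fun i => (c i, c i * z i), fun e he => ?_⟩
  have := hwz (Polynomial.X ^ e) (by simpa using he)
  rw [paramFunctional, momentFunctional_X_pow] at this
  rw [this]
  refine Finset.sum_congr rfl fun i _ => ?_
  rw [Polynomial.eval_pow, Polynomial.eval_X, ← hc i, mul_pow, ← mul_assoc, ← pow_add,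
    Nat.sub_add_cancel he]

/-- A Vandermonde decomposition yields a squarefree apolar form. -/
lemma exists_squarefree_apolar_of_decomposition {d K : ℕ} {h : Fin (d + 1) → ℂ}
    {ab : Fin K → ℂ × ℂ}
    (hab : ∀ e ≤ d, paramSeq h e = ∑ k, (ab k).1 ^ (d - e) * (ab k).2 ^ e) :
    ∃ k ≤ K, ∃ q ∈ apolar (paramFunctional h) d k, Squarefree q ∧ k ≤ q.natDegree + 1 := by
  classical
  set F : Finset (Fin K) := Finset.univ.filter fun k => (ab k).1 ≠ 0 with hF
  set I : Finset (Fin K) := Finset.univ.filter fun k => ¬ (ab k).1 ≠ 0 with hI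
  set Z : Finset ℂ := F.image fun k => (ab k).2 / (ab k).1 with hZ
  set q : ℂ[X] := ∏ z ∈ Z, (Polynomial.X - Polynomial.C z) with hq
  have hcard : F.card + I.card = K := by
    have := Finset.card_filter_add_card_filter_not (s := Finset.univ)
      (fun k : Fin K => (ab k).1 ≠ 0)
    rwa [Finset.card_univ, Fintype.card_fin] at this
  have hZF : Z.card ≤ F.card := Finset.card_image_le
  have hqdeg : q.natDegree = Z.card := by rw [hq]; simp
  have hqsq : Squarefree q := by
    refine Finset.squarefree_prod_of_pairwise_isCoprime ?_
      fun z _ => (Polynomial.irreducible_X_sub_C z).squarefree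
    intro x _ y _ hxy
    exact (Polynomial.pairwise_coprime_X_sub_C Function.injective_id hxy).isRelPrime
  refine ⟨Z.card + min 1 I.card, by omega, q, ⟨by omega, fun p hp => ?_⟩, hqsq, by omega⟩
  have hdeg : (q * p).natDegree + min 1 I.card ≤ d := by
    have := Polynomial.natDegree_mul_le (p := q) (q := p)
    omega
  rw [paramFunctional_eq_sum h (by omega)]
  have hexp : ∀ l : Fin (d + 1), (q * p).coeff l * h l =
      ∑ k, (q * p).coeff l * ((ab k).1 ^ (d - (l : ℕ)) * (ab k).2 ^ (l : ℕ)) := by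
    intro l
    rw [← Finset.mul_sum, ← hab l (by omega), paramSeq_of_lt h l.isLt]
  rw [Finset.sum_congr rfl fun l _ => hexp l, Finset.sum_comm]
  refine Finset.sum_eq_zero fun k _ => ?_
  by_cases hk : (ab k).1 = 0
  · refine Finset.sum_eq_zero fun l _ => ?_
    have hI1 : 0 < I.card := Finset.card_pos.2 ⟨k, by simp [hI, hk]⟩
    by_cases hl : (l : ℕ) = d
    · rw [Polynomial.coeff_eq_zero_of_natDegree_lt (by omega), zero_mul]
    · rw [hk, zero_pow (by omega), zero_mul, mul_zero]
  · have hz : (ab k).2 / (ab k).1 ∈ Z :=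
      Finset.mem_image_of_mem _ (by simp [hF, hk])
    have hroot : q.eval ((ab k).2 / (ab k).1) = 0 := by
      rw [hq, Polynomial.eval_prod]
      exact Finset.prod_eq_zero hz (by simp)
    have heval : (q * p).eval ((ab k).2 / (ab k).1) = 0 := by
      rw [Polynomial.eval_mul, hroot, zero_mul]
    rw [Polynomial.eval_eq_sum_range' (n := d + 1) (by omega), Finset.sum_range] at heval
    calc _ = (ab k).1 ^ d * ∑ l : Fin (d + 1),
          (q * p).coeff l * ((ab k).2 / (ab k).1) ^ (l : ℕ) := by
          rw [Finset.mul_sum]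
          refine Finset.sum_congr rfl fun l _ => ?_
          have : (ab k).1 ^ d = (ab k).1 ^ (d - (l : ℕ)) * (ab k).1 ^ (l : ℕ) := by
            rw [← pow_add, Nat.sub_add_cancel (by omega)]
          rw [this, div_pow]
          field_simp
      _ = 0 := by rw [heval, mul_zero]

lemma vandSet_subset_symSet (m n r : ℕ) : vandSet m n r ⊆ symSet m n r :=
  fun _ ⟨ab, hab⟩ => ⟨fun k => vand n (ab k).1 (ab k).2, hab⟩

lemma symSet_subset_cpSet (m n r : ℕ) : symSet m n r ⊆ cpSet m n r :=
  fun _ ⟨v, hv⟩ => ⟨fun k _ => v k, hv⟩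

/-- Catalecticant ranks bound the border rank from below through flattenings. -/
lemma rank_hMat_le_of_mem_closure_cpSet {m₀ n R : ℕ} (hn : 0 < n) {T : Tensor (2 * m₀ + 1) n}
    {h : Fin ((n - 1) * (2 * m₀ + 1) + 1) → ℂ} (hT : IsHankel T h)
    (hcl : T ∈ closure (cpSet (2 * m₀ + 1) n R)) :
    (hMat ((n - 1) * (2 * m₀ + 1)) ((n - 1) * m₀) h).rank ≤ R := by
  classical
  have hdk : (n - 1) * (2 * m₀ + 1) - (n - 1) * m₀ = (n - 1) * (m₀ + 1) := by
    rw [← Nat.mul_sub]; congr 1; omega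
  let idx : ℕ → ℕ → Fin (2 * m₀ + 1) → Fin n := fun a b t =>
    if (t : ℕ) < m₀ then greedyIndex hn a t else greedyIndex hn b (t - m₀)
  have hidx : ∀ a ≤ (n - 1) * m₀, ∀ b ≤ (n - 1) * (2 * m₀ + 1) - (n - 1) * m₀,
      ∑ t, (idx a b t : ℕ) = a + b := by
    intro a ha b hb
    rw [Fin.sum_univ_eq_sum_range (fun t => ((if t < m₀ then greedyIndex hn a t
      else greedyIndex hn b (t - m₀) : Fin n) : ℕ)) (2 * m₀ + 1),
      show 2 * m₀ + 1 = m₀ + (m₀ + 1) by omega, Finset.sum_range_add]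
    congr 1
    · have hs := sum_greedyIndex hn a m₀
      rw [min_eq_left ha] at hs
      refine Eq.trans (Finset.sum_congr rfl fun t ht => ?_) hs
      rw [if_pos (Finset.mem_range.1 ht)]
    · rw [hdk] at hb
      have hs := sum_greedyIndex hn b (m₀ + 1)
      rw [min_eq_left hb] at hs
      refine Eq.trans (Finset.sum_congr rfl fun t _ => ?_) hs
      rw [if_neg (by omega), Nat.add_sub_cancel_left]
  obtain ⟨κ, a, hainj, haspan, hali⟩ := exists_linearIndependent' ℂ (hMat _ ((n - 1) * m₀) h).col
  have : Finite κ := Finite.of_injective a hainj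
  have := Fintype.ofFinite κ
  have hcard : (hMat _ ((n - 1) * m₀) h).rank = Fintype.card κ := by
    rw [Matrix.rank_eq_finrank_span_cols, ← haspan, finrank_span_eq_card hali]
  let flat : Tensor (2 * m₀ + 1) n → κ → Fin ((n - 1) * (2 * m₀ + 1) - (n - 1) * m₀ + 1) → ℂ := fun S x b => S (idx (a x) b)
  have hflat : Continuous flat :=
    continuous_pi fun x => continuous_pi fun b => continuous_apply _
  have hflatT : flat T = (hMat _ ((n - 1) * m₀) h).col ∘ a := by
    funext x b
    change T (idx (a x) b) = hMat _ ((n - 1) * m₀) h b (a x)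
    rw [hT.apply_eq_paramSeq, hidx _ (by omega) _ (by omega), hMat_apply,
      Nat.add_comm (a x : ℕ)]
  have hopen : IsOpen (flat ⁻¹' {v | LinearIndependent ℂ v}) :=
    isOpen_setOfPred_linearIndependent.preimage hflat
  obtain ⟨S, hS, u, hu⟩ := mem_closure_iff.1 hcl _ hopen
    (show LinearIndependent ℂ (flat T) by rw [hflatT]; exact hali)
  have hS' : LinearIndependent ℂ (flat S) := hS
  let β : Fin R → Fin ((n - 1) * (2 * m₀ + 1) - (n - 1) * m₀ + 1) → ℂ := fun l b =>
    ∏ t ∈ Finset.univ.filter (fun t : Fin (2 * m₀ + 1) => ¬ (t : ℕ) < m₀),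
      u l t (greedyIndex hn b (t - m₀))
  have hspan : Submodule.span ℂ (Set.range (flat S)) ≤ Submodule.span ℂ (Set.range β) := by
    rw [Submodule.span_le]
    rintro _ ⟨x, rfl⟩
    have : flat S x = ∑ l, (∏ t ∈ Finset.univ.filter
        (fun t : Fin (2 * m₀ + 1) => (t : ℕ) < m₀), u l t (greedyIndex hn (a x) t)) • β l := by
      funext b
      rw [Finset.sum_apply]
      refine (hu _).trans (Finset.sum_congr rfl fun l _ => ?_)
      rw [← Finset.prod_filter_mul_prod_filter_not Finset.univ
        (fun t : Fin (2 * m₀ + 1) => (t : ℕ) < m₀), Pi.smul_apply, smul_eq_mul]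
      congr 1
      · refine Finset.prod_congr rfl fun t ht => ?_
        simp only [idx, if_pos (Finset.mem_filter.1 ht).2]
      · refine Finset.prod_congr rfl fun t ht => ?_
        simp only [idx, if_neg (Finset.mem_filter.1 ht).2]
    rw [this]
    exact Submodule.sum_mem _ fun l _ =>
      Submodule.smul_mem _ _ (Submodule.subset_span ⟨l, rfl⟩)
  rw [hcard, ← finrank_span_eq_card hS']
  exact (Submodule.finrank_mono hspan).trans
    ((finrank_range_le_card β).trans (Fintype.card_fin R).le)

/-- The Hankel tensor with given parameter vector. -/
def hankelTensor (m n : ℕ) (h : Fin ((n - 1) * m + 1) → ℂ) : Tensor m n :=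
  fun i => h ⟨∑ j, (i j : ℕ), Nat.lt_succ_of_le (sum_index_le i)⟩

lemma isHankel_hankelTensor {m n : ℕ} (h : Fin ((n - 1) * m + 1) → ℂ) :
    IsHankel (hankelTensor m n h) h := fun _ => rfl

/-- A Hankel tensor with an apolar form of degree `r` has border Vandermonde rank at most `r`. -/
lemma mem_closure_vandSet_of_mem_apolar {m n r : ℕ} (hn : 0 < n) {T : Tensor m n}
    {h : Fin ((n - 1) * m + 1) → ℂ} (hT : IsHankel T h) {f : ℂ[X]}
    (hf : f ∈ apolar (paramFunctional h) ((n - 1) * m) r) (hf0 : f ≠ 0) (hr : 0 < r)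
    (hrd : r ≤ (n - 1) * m) : T ∈ closure (vandSet m n r) := by
  have hTh : hankelTensor m n h = T := funext fun i => (hT i).symm
  rw [← hTh]
  refine map_mem_closure (f := hankelTensor m n)
    (continuous_pi fun i => continuous_apply _)
    (mem_closure_setOf_squarefree_apolar hf hf0 hr hrd) ?_
  rintro h' ⟨P, hP, hPr, hPsq⟩
  exact mem_vandSet_of_squarefree_apolar hn (isHankel_hankelTensor h') (by omega) hP hPr hPsq

/-- Odd order `m = 2m₀+1`: if `r ≤ 1+(n-1)m₀` and every nonzero kernel
vector has a non-squarefree binary form, then `rank_V(H) = d-r+2`, the border ranks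
equal `r`, and `r ≤ rank_S(H) ≤ d-r+2`. -/
theorem stmt_12 (n m₀ : ℕ) (hn : 2 ≤ n) (hm : 1 ≤ m₀)
    (H : Tensor (2 * m₀ + 1) n) (h : Fin ((n - 1) * (2 * m₀ + 1) + 1) → ℂ)
    (hH : IsHankel H h)
    (r : ℕ)
    (hr : r = (hMat ((n - 1) * (2 * m₀ + 1)) ((n - 1) * (2 * m₀ + 1) / 2) h).rank)
    (hrs : r ≤ 1 + (n - 1) * m₀)
    (hker : ∃ f : Fin (r + 1) → ℂ, f ≠ 0 ∧
      (hMat ((n - 1) * (2 * m₀ + 1)) r h).mulVec f = 0)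
    (hnsf : ∀ f : Fin (r + 1) → ℂ, f ≠ 0 →
      (hMat ((n - 1) * (2 * m₀ + 1)) r h).mulVec f = 0 → ¬ Squarefree (binForm r f)) :
    vandRank H = (n - 1) * (2 * m₀ + 1) - r + 2 ∧
      bVandRank H = r ∧ bSymRank H = r ∧ brank H = r ∧
      r ≤ symRank H ∧ symRank H ≤ (n - 1) * (2 * m₀ + 1) - r + 2 := by
  have hn0 : 0 < n := by omega
  have hN : 1 ≤ n - 1 := by omega
  have hd' : (n - 1) * (2 * m₀ + 1) = 2 * ((n - 1) * m₀) + (n - 1) := by ring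
  have hNm : n - 1 ≤ (n - 1) * m₀ := Nat.le_mul_of_pos_right _ hm
  have h2r : 2 * r ≤ (n - 1) * (2 * m₀ + 1) + 1 := by omega
  have hrd : r ≤ (n - 1) * (2 * m₀ + 1) := by omega
  obtain ⟨φ, hφ0, hφ⟩ := hker
  have hf : coeffPoly r φ ∈ apolar (paramFunctional h) ((n - 1) * (2 * m₀ + 1)) r :=
    (coeffPoly_mem_apolar_iff h hrd φ).2 hφ
  have hf0 : coeffPoly r φ ≠ 0 := fun h0 =>
    hφ0 (coeffPoly_injective r (by rw [h0, map_zero]))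
  have hnot : Squarefree (coeffPoly r φ) → ¬ r ≤ (coeffPoly r φ).natDegree + 1 :=
    fun h1 h2 => hnsf φ hφ0 hφ (squarefree_binForm h1 h2)
  have hmin : ∀ j < r, ∀ e ∈ apolar (paramFunctional h) ((n - 1) * (2 * m₀ + 1)) j, e = 0 :=
    fun j hj e he => eq_zero_of_mem_apolar_of_lt_rank h (Nat.div_le_self _ 2) (hr ▸ hj) he
  have hr2 : 2 ≤ r := by
    by_contra hlt
    refine hnot ?_ (by omega)
    rcases Nat.lt_or_ge (coeffPoly r φ).natDegree 1 with h1 | h1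
    · refine IsUnit.squarefree ?_
      rw [Polynomial.isUnit_iff_degree_eq_zero, Polynomial.degree_eq_natDegree hf0,
        Nat.lt_one_iff.1 h1]
      rfl
    · refine (Polynomial.irreducible_of_degree_eq_one ?_).squarefree
      have h2 := natDegree_coeffPoly_le r φ
      rw [Polynomial.degree_eq_natDegree hf0,
        show (coeffPoly r φ).natDegree = 1 by omega]
      rfl
  have hupper : H ∈ vandSet (2 * m₀ + 1) n ((n - 1) * (2 * m₀ + 1) - r + 2) := by
    obtain ⟨P, hP, hPd, hPsq⟩ := exists_squarefree_mem_apolar hmin hf hf0 hr2 h2r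
    exact mem_vandSet_of_squarefree_apolar hn0 hH (by omega) hP hPd hPsq
  have hlower : ∀ K, H ∈ vandSet (2 * m₀ + 1) n K →
      (n - 1) * (2 * m₀ + 1) - r + 2 ≤ K := by
    intro K hK
    by_contra hlt
    obtain ⟨ab, hab⟩ := (mem_vandSet_iff hn0 hH).1 hK
    obtain ⟨k, hkK, q, hq, hqsq, hqk⟩ := exists_squarefree_apolar_of_decomposition hab
    obtain ⟨h1, h2⟩ := dvd_of_mem_apolar hmin hf hq hf0 hqsq.ne_zero hrd (by omega)
    exact hnot (hqsq.squarefree_of_dvd h1) (by omega)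
  have hborder : H ∈ closure (vandSet (2 * m₀ + 1) n r) :=
    mem_closure_vandSet_of_mem_apolar hn0 hH hf hf0 (by omega) hrd
  have hcp : ∀ R, H ∈ closure (cpSet (2 * m₀ + 1) n R) → r ≤ R := fun R hR =>
    (le_rank_hMat hmin hf hf0 hrd (by omega) (by omega) (by omega)).trans
      (rank_hMat_le_of_mem_closure_cpSet hn0 hH hR)
  have hsym : ∀ R, H ∈ closure (symSet (2 * m₀ + 1) n R) → r ≤ R := fun R hR =>
    hcp R (closure_mono (symSet_subset_cpSet _ _ _) hR)
  have hvand : ∀ R, H ∈ closure (vandSet (2 * m₀ + 1) n R) → r ≤ R := fun R hR =>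
    hsym R (closure_mono (vandSet_subset_symSet _ _ _) hR)
  have hborder' := closure_mono (vandSet_subset_symSet _ _ _) hborder
  have hborder'' := closure_mono (symSet_subset_cpSet _ _ _) hborder'
  have hupper' := vandSet_subset_symSet _ _ _ hupper
  have hsInf : ∀ {S : Set ℕ} {k : ℕ}, k ∈ S → (∀ x ∈ S, k ≤ x) → sInf S = k :=
    fun hk hle => le_antisymm (Nat.sInf_le hk) (le_csInf ⟨_, hk⟩ hle)
  exact ⟨hsInf hupper hlower, hsInf hborder hvand, hsInf hborder' hsym, hsInf hborder'' hcp,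
    le_csInf ⟨_, hupper'⟩ fun R hR => hsym R (subset_closure hR), Nat.sInf_le hupper'⟩
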